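/- Let R = K[X_1,…,X_n]/I be a standard graded algebra over a field K, let V ⊆ 𝔸(R_1) be an irreducible variety whose points span the vector space R_1, and assume that K is algebraically closed or that the defining ideal of V is homogeneous. Let d > 0 and let dim_K R_d = C(k_d,d) + C(k_{d−1},d−1) + … + C(k_1,1) be the d-th Macaulay representation of dim_K R_d. Then for any p linear forms l_1,…,l_p of R that are general points of V (i.e. for all p-tuples in some nonempty Zariski open subset of V^p) one has dim_K (R/(l_1,…,l_p))_d ≤ C(k_d−p,d) + C(k_{d−1}−p,d−1) + … + C(k_1−p,1). -/

import Mathlib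

/-- Polynomial functions on a `K`-vector space `V`: the subalgebra of `V → K`
generated by the linear functionals. -/
def polyFuns (K V : Type*) [Field K] [AddCommGroup V] [Module K V] : Subalgebra K (V → K) :=
  Algebra.adjoin K {f : V → K | ∃ φ : V →ₗ[K] K, ⇑φ = f}

/-- A subset of (the affine space of) a `K`-vector space is Zariski closed if it is the
common zero locus of a family of polynomial functions. -/
def IsZClosed (K : Type*) {V : Type*} [Field K] [AddCommGroup V] [Module K V]
    (Z : Set V) : Prop :=
  ∃ S : Set (V → K), (∀ f ∈ S, f ∈ polyFuns K V) ∧ Z = {v | ∀ f ∈ S, f v = 0}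

/-- A subset is Zariski open if its complement is Zariski closed. -/
def IsZOpen (K : Type*) {V : Type*} [Field K] [AddCommGroup V] [Module K V]
    (U : Set V) : Prop :=
  IsZClosed K Uᶜ

/-- An irreducible variety: a nonempty Zariski closed set which is not the union of two
proper closed subsets. -/
def IsIrredVariety (K : Type*) {V : Type*} [Field K] [AddCommGroup V] [Module K V]
    (W : Set V) : Prop :=
  IsZClosed K W ∧ W.Nonempty ∧
    ∀ Z₁ Z₂ : Set V, IsZClosed K Z₁ → IsZClosed K Z₂ → W ⊆ Z₁ ∪ Z₂ → (W ⊆ Z₁ ∨ W ⊆ Z₂)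

/-- Auxiliary recursion for `wordIdeal`: letters are booleans, `true` standing for the
letter `c` (colon) and `false` for the letter `s` (sum). The natural number argument keeps
track of which linear form is to be used next (0-indexed). -/
def wordIdealAux {R : Type*} [CommRing R] (l : ℕ → R) : ℕ → Ideal R → List Bool → Ideal R
  | _, I, [] => I
  | j, I, a :: o =>
      wordIdealAux l (j + 1)
        (if a then I.colon (Ideal.span {l j}) else I ⊔ Ideal.span {l j}) o

/-- The ideal `I_{l,o}` attached to a sequence of (linear) forms `l` and a word `o` in the
letters `{c, s}` (here `c = true`, `s = false`): starting from `(0)`, the `j`-th letter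
either colons (`c`) or adds (`s`) the `j`-th form. -/
def wordIdeal {R : Type*} [CommRing R] (l : ℕ → R) (o : List Bool) : Ideal R :=
  wordIdealAux l 0 ⊥ o

/-- The degree `d` component `I ∩ R_d` of an ideal `I`, as a `K`-subspace of `𝒜 d`. -/
def homComp {K R : Type*} [Field K] [CommRing R] [Algebra K R]
    (𝒜 : ℕ → Submodule K R) (I : Ideal R) (d : ℕ) : Submodule K (𝒜 d) :=
  Submodule.comap (𝒜 d).subtype (Submodule.restrictScalars K I)

/-- `dim_K (I)_d`, the dimension of the degree `d` component of the (homogeneous) ideal `I`. -/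
noncomputable def homDim {K R : Type*} [Field K] [CommRing R] [Algebra K R]
    (𝒜 : ℕ → Submodule K R) (I : Ideal R) (d : ℕ) : ℕ :=
  Module.finrank K (homComp 𝒜 I d)

/-- `dim_K (R/I)_d`, the dimension of the degree `d` component of `R/I` for a
(homogeneous) ideal `I`, computed as `dim 𝒜 d / (I ∩ 𝒜 d)`. -/
noncomputable def quotDim {K R : Type*} [Field K] [CommRing R] [Algebra K R]
    (𝒜 : ℕ → Submodule K R) (I : Ideal R) (d : ℕ) : ℕ :=
  Module.finrank K ((𝒜 d) ⧸ homComp 𝒜 I d)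

/-- `macaulayDown c d = c_⟨d⟩`: if `c = C(k_d,d) + … + C(k_1,1)` is the `d`-th Macaulay
representation of `c`, then `c_⟨d⟩ = C(k_d - 1,d) + … + C(k_1 - 1,1)`; computed greedily. -/
def macaulayDown : ℕ → ℕ → ℕ
  | _, 0 => 0
  | c, d + 1 =>
      let k := Nat.findGreatest (fun k => Nat.choose k (d + 1) ≤ c) (c + d + 1)
      Nat.choose (k - 1) (d + 1) + macaulayDown (c - Nat.choose k (d + 1)) d

/-- Property (Gr,d) for the linear forms `l 0, …, l (r-1)` (letters: `true = c`,
`false = s`): for every word `o` of length `i ≤ r`,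
(1) if `m ⊄ I_o` and `i < r` then `l_{i+1} ∉ I_o`;
(2) if `i = r` and `|o|_c < d` then `m ⊆ I_o`;
(3) if `i ≤ r - 2` then `dim (I_{o,c,s})_{d - |o|_c - 1} ≤ dim (I_{o,s,c})_{d - |o|_c - 1}`. -/
def GrProp {K R : Type*} [Field K] [CommRing R] [Algebra K R]
    (𝒜 : ℕ → Submodule K R) [GradedAlgebra 𝒜] (l : ℕ → R) (r d : ℕ) : Prop :=
  ∀ o : List Bool, o.length ≤ r →
    (¬ (HomogeneousIdeal.irrelevant 𝒜).toIdeal ≤ wordIdeal l o → o.length < r →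
        l o.length ∉ wordIdeal l o) ∧
    (o.length = r → o.count true < d →
        (HomogeneousIdeal.irrelevant 𝒜).toIdeal ≤ wordIdeal l o) ∧
    (o.length + 2 ≤ r →
        homDim 𝒜 (wordIdeal l (o ++ [true, false])) (d - o.count true - 1) ≤
          homDim 𝒜 (wordIdeal l (o ++ [false, true])) (d - o.count true - 1))

/-!
Write `L` for the space of linear forms, so that the degree `n` component is `L ^ n`. For a
subspace `N` of `L ^ d` of codimension `c` choose `l ∈ V` for which `N + l L ^ (d - 1)` has maximal
dimension, and let `a` be its codimension; then the colon space `(N : l) ⊆ L ^ (d - 1)` has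
codimension `c - a`. By induction, a second general `l' ∈ V` cuts these codimensions down to at
most `a_⟨d⟩` and `(c - a)_⟨d - 1⟩`; irreducibility of `V` allows one `l'` to serve both purposes,
because the rank conditions are open. Since `(N : l) + l' L ^ (d - 2)` is contained in
`(N + l' L ^ (d - 1) : l)` and the dimension of `N + l' L ^ (d - 1)` does not exceed that of
`N + l L ^ (d - 1)`, one gets `a ≤ a_⟨d⟩ + (c - a)_⟨d - 1⟩`, and arithmetic of Macaulay
representations turns this into Green's bound `a ≤ c_⟨d⟩`. Applying it `p` times produces one good
tuple in `V ^ p`, and the tuples satisfying the resulting rank bound form an open set.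
-/

section MacaulayRepresentation

theorem le_choose_succ_add (k d : ℕ) : k ≤ k.choose (d + 1) + d := by
  induction k with
  | zero => exact Nat.zero_le _
  | succ k ih =>
    rcases lt_or_ge k d with hkd | hdk
    · omega
    · have : 0 < k.choose d := Nat.choose_pos hdk
      have := Nat.choose_succ_succ' k d
      omega

theorem exists_lt_choose_succ (c d : ℕ) : ∃ k : ℕ, c < k.choose (d + 1) :=
  ⟨c + d + 1, by have := le_choose_succ_add (c + d + 1) d; omega⟩

theorem exists_eq_choose_succ_add {c d q : ℕ} (hc₀ : 0 < c) (hc : c < q.choose (d + 1)) :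
    ∃ k r : ℕ, d < k ∧ k < q ∧ r < k.choose d ∧ c = k.choose (d + 1) + r := by
  induction q with
  | zero => simp at hc
  | succ q ih =>
    rcases lt_or_ge c (q.choose (d + 1)) with hlt | hge
    · obtain ⟨k, r, hdk, hkq, hr⟩ := ih hlt
      exact ⟨k, r, hdk, hkq.trans q.lt_succ_self, hr⟩
    · have hdq : d < q := by
        by_contra! hqd
        have := Nat.choose_le_choose (d + 1) (Nat.add_le_add_right hqd 1)
        rw [Nat.choose_self] at this
        omega
      rw [Nat.choose_succ_succ'] at hc
      exact ⟨q, c - q.choose (d + 1), hdq, q.lt_succ_self, by omega, by omega⟩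

theorem findGreatest_choose_succ_le {d k r : ℕ} (hr : r < k.choose d) :
    Nat.findGreatest (fun j => j.choose (d + 1) ≤ k.choose (d + 1) + r)
      (k.choose (d + 1) + r + d + 1) = k := by
  rw [Nat.findGreatest_eq_iff]
  refine ⟨?_, fun _ => Nat.le_add_right _ _, fun j hkj _ hj => ?_⟩
  · have := le_choose_succ_add k d
    omega
  · have : (k + 1).choose (d + 1) ≤ j.choose (d + 1) := Nat.choose_le_choose _ hkj
    rw [Nat.choose_succ_succ'] at this
    omega

theorem macaulayDown_choose_add_of_lt {d k r : ℕ} (hr : r < k.choose d) :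
    macaulayDown (k.choose (d + 1) + r) (d + 1) =
      (k - 1).choose (d + 1) + macaulayDown r d := by
  simp only [macaulayDown, findGreatest_choose_succ_le hr, Nat.add_sub_cancel_left]

@[simp]
theorem macaulayDown_zero_left (d : ℕ) : macaulayDown 0 d = 0 := by
  induction d with
  | zero => rfl
  | succ d ih =>
    simpa [ih, Nat.choose_eq_zero_of_lt (show d - 1 < d + 1 by omega)] using
      macaulayDown_choose_add_of_lt (d := d) (k := d) (r := 0) (by simp)

theorem macaulayDown_choose (k d : ℕ) :
    macaulayDown (k.choose (d + 1)) (d + 1) = (k - 1).choose (d + 1) := by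
  rcases lt_or_ge k d with hkd | hdk
  · rw [Nat.choose_eq_zero_of_lt (by omega), Nat.choose_eq_zero_of_lt (by omega),
      macaulayDown_zero_left]
  · simpa using macaulayDown_choose_add_of_lt (r := 0) (Nat.choose_pos hdk)

theorem macaulayDown_one_right (c : ℕ) : macaulayDown c 1 = c - 1 := by
  simpa using macaulayDown_choose c 0

theorem macaulayDown_one_left (d : ℕ) : macaulayDown 1 (d + 1) = 0 := by
  simpa using macaulayDown_choose (d + 1) d

theorem choose_succ_eq_choose_pred_add {k : ℕ} (hk : 0 < k) (d : ℕ) :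
    k.choose (d + 1) = (k - 1).choose (d + 1) + (k - 1).choose d := by
  rw [← Nat.succ_pred_eq_of_pos hk, Nat.choose_succ_succ', add_comm]
  rfl

/-- At `r = C(k, d + 1)` the greedy top entry of the left-hand side is `k + 1`, not `k`; the
formula survives by Pascal's rule. -/
theorem macaulayDown_choose_add_of_le {d k r : ℕ} (hr : r ≤ k.choose (d + 1)) :
    macaulayDown (k.choose (d + 2) + r) (d + 2) =
      (k - 1).choose (d + 2) + macaulayDown r (d + 1) := by
  rcases hr.lt_or_eq with hlt | rfl
  · exact macaulayDown_choose_add_of_lt hlt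
  rcases k.eq_zero_or_pos with rfl | hk
  · simp
  · rw [add_comm, ← Nat.choose_succ_succ', macaulayDown_choose, macaulayDown_choose,
      Nat.add_sub_cancel, choose_succ_eq_choose_pred_add hk]

theorem macaulayDown_succ_bounds (c d : ℕ) :
    macaulayDown c (d + 1) ≤ macaulayDown (c + 1) (d + 1) ∧
      macaulayDown (c + 1) (d + 1) ≤ macaulayDown c (d + 1) + 1 := by
  induction d generalizing c with
  | zero =>
    simp only [zero_add, macaulayDown_one_right]
    omega
  | succ d ih =>
    rcases c.eq_zero_or_pos with rfl | hc
    · simp [macaulayDown_one_left]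
    obtain ⟨q, hq⟩ := exists_lt_choose_succ c (d + 1)
    obtain ⟨k, r, -, -, hr, rfl⟩ := exists_eq_choose_succ_add hc hq
    rw [add_assoc _ r 1, macaulayDown_choose_add_of_le hr.le,
      macaulayDown_choose_add_of_le (Nat.succ_le_of_lt hr), add_assoc]
    exact (ih r).imp (Nat.add_le_add_left · _) (Nat.add_le_add_left · _)

theorem macaulayDown_mono (d : ℕ) : Monotone (macaulayDown · (d + 1)) :=
  monotone_nat_of_le_succ fun c => (macaulayDown_succ_bounds c d).1

theorem macaulayDown_add_le (c b d : ℕ) :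
    macaulayDown (c + b) (d + 1) ≤ macaulayDown c (d + 1) + b := by
  induction b with
  | zero => rfl
  | succ b ih =>
    have := (macaulayDown_succ_bounds (c + b) d).2
    rw [← add_assoc]
    omega

theorem sum_choose_lt_choose {d q : ℕ} {k : ℕ → ℕ} (hk : StrictMonoOn k (Set.Icc 1 d))
    (hq : ∀ i ∈ Set.Icc 1 d, k i < q) : ∑ i ∈ Finset.Icc 1 d, (k i).choose i < q.choose d := by
  induction d generalizing q with
  | zero => simp
  | succ d ih =>
    have htop : d + 1 ∈ Set.Icc 1 (d + 1) := ⟨by omega, le_rfl⟩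
    have hsub : Set.Icc 1 d ⊆ Set.Icc 1 (d + 1) := Set.Icc_subset_Icc_right d.le_succ
    have hlow : ∑ i ∈ Finset.Icc 1 d, (k i).choose i < (k (d + 1)).choose d :=
      ih (hk.mono hsub) fun i hi => hk (hsub hi) htop (Nat.lt_succ_of_le hi.2)
    calc ∑ i ∈ Finset.Icc 1 (d + 1), (k i).choose i
        < (k (d + 1)).choose d + (k (d + 1)).choose (d + 1) := by
          rw [Finset.sum_Icc_succ_top (by omega)]
          omega
      _ = (k (d + 1) + 1).choose (d + 1) := (Nat.choose_succ_succ' _ _).symm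
      _ ≤ q.choose (d + 1) := Nat.choose_le_choose _ (hq _ htop)

theorem macaulayDown_sum_choose {d : ℕ} {k : ℕ → ℕ} (hk : StrictMonoOn k (Set.Icc 1 d)) :
    macaulayDown (∑ i ∈ Finset.Icc 1 d, (k i).choose i) d =
      ∑ i ∈ Finset.Icc 1 d, (k i - 1).choose i := by
  induction d with
  | zero => simp
  | succ d ih =>
    have hsub : Set.Icc 1 d ⊆ Set.Icc 1 (d + 1) := Set.Icc_subset_Icc_right d.le_succ
    have hlow : ∑ i ∈ Finset.Icc 1 d, (k i).choose i < (k (d + 1)).choose d :=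
      sum_choose_lt_choose (hk.mono hsub) fun i hi =>
        hk (hsub hi) ⟨by omega, le_rfl⟩ (Nat.lt_succ_of_le hi.2)
    rw [Finset.sum_Icc_succ_top (by omega), Finset.sum_Icc_succ_top (by omega), add_comm,
      macaulayDown_choose_add_of_lt hlow, ih (hk.mono hsub), add_comm]

/-- After subtracting `p` the entries may stop increasing strictly, but only where they are too
small to contribute; raising them to `i - 1` repairs this without changing any binomial
coefficient. -/
theorem macaulayDown_sum_choose_sub {d : ℕ} {k : ℕ → ℕ} (hk : StrictMonoOn k (Set.Icc 1 d))
    (p : ℕ) :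
    macaulayDown (∑ i ∈ Finset.Icc 1 d, (k i - p).choose i) d =
      ∑ i ∈ Finset.Icc 1 d, (k i - (p + 1)).choose i := by
  have hstrict : StrictMonoOn (fun i => max (k i - p) (i - 1)) (Set.Icc 1 d) := by
    intro i hi j hj hij
    have := hk hi hj hij
    have := hi.1
    simp only
    omega
  have hchoose : ∀ i ∈ Finset.Icc 1 d, ∀ q,
      (max (k i - p) (i - 1) - q).choose i = (k i - (p + q)).choose i := by
    intro i hi q
    have := (Finset.mem_Icc.mp hi).1
    rcases le_total (i - 1) (k i - p) with h | h
    · rw [max_eq_left h, Nat.sub_sub]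
    · rw [max_eq_right h, Nat.choose_eq_zero_of_lt (by omega), Nat.choose_eq_zero_of_lt (by omega)]
  convert macaulayDown_sum_choose hstrict using 2
  · exact Finset.sum_congr rfl fun i hi => (hchoose i hi 0).symm
  · exact (hchoose _ ‹_› 1).symm

/-- The Kruskal–Katona operator `c ↦ c^{(d)} = C(k_d, d + 1) + … + C(k_1, 2)`, where
`c = C(k_d, d) + … + C(k_1, 1)` is the `d`-th Macaulay representation, computed greedily with the
same recursion as `macaulayDown`. It serves to bound `x ↦ x - x_⟨d + 1⟩`, which takes the value `c`
at `x = c + c^{(d)}`. -/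
def kruskalKatonaUp : ℕ → ℕ → ℕ
  | _, 0 => 0
  | c, d + 1 =>
      let k := Nat.findGreatest (fun k => Nat.choose k (d + 1) ≤ c) (c + d + 1)
      Nat.choose k (d + 2) + kruskalKatonaUp (c - Nat.choose k (d + 1)) d

theorem kruskalKatonaUp_choose_add {d k r : ℕ} (hr : r < k.choose d) :
    kruskalKatonaUp (k.choose (d + 1) + r) (d + 1) =
      k.choose (d + 2) + kruskalKatonaUp r d := by
  simp only [kruskalKatonaUp, findGreatest_choose_succ_le hr, Nat.add_sub_cancel_left]

@[simp]
theorem kruskalKatonaUp_zero_left (d : ℕ) : kruskalKatonaUp 0 d = 0 := by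
  induction d with
  | zero => rfl
  | succ d ih =>
    simpa [ih, Nat.choose_eq_zero_of_lt (show d < d + 2 by omega)] using
      kruskalKatonaUp_choose_add (d := d) (k := d) (r := 0) (by simp)

theorem kruskalKatonaUp_lt_choose {c d k : ℕ} (hdk : d < k) (hc : c < k.choose d) :
    kruskalKatonaUp c d < k.choose (d + 1) := by
  induction d generalizing c k with
  | zero => simpa [kruskalKatonaUp] using hdk
  | succ d ih =>
    rcases c.eq_zero_or_pos with rfl | hc₀
    · simpa using Nat.choose_pos hdk
    obtain ⟨j, r, hdj, hjk, hr, rfl⟩ := exists_eq_choose_succ_add hc₀ hc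
    calc kruskalKatonaUp (j.choose (d + 1) + r) (d + 1)
        = j.choose (d + 2) + kruskalKatonaUp r d := kruskalKatonaUp_choose_add hr
      _ < j.choose (d + 2) + j.choose (d + 1) := Nat.add_lt_add_left (ih hdj hr) _
      _ = (j + 1).choose (d + 2) := by rw [Nat.choose_succ_succ', add_comm]
      _ ≤ k.choose (d + 2) := Nat.choose_le_choose _ hjk

theorem macaulayDown_add_kruskalKatonaUp {c d k : ℕ} (hc : c < k.choose d) :
    macaulayDown (c + kruskalKatonaUp c d) (d + 1) = kruskalKatonaUp c d := by
  rcases c.eq_zero_or_pos with rfl | hc₀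
  · simp
  induction d generalizing c k with
  | zero =>
    rw [Nat.choose_zero_right] at hc
    omega
  | succ d ih =>
    obtain ⟨j, r, hdj, -, hr, rfl⟩ := exists_eq_choose_succ_add hc₀ hc
    have hsum : r + kruskalKatonaUp r d < (j + 1).choose (d + 1) := by
      have := kruskalKatonaUp_lt_choose hdj hr
      rw [Nat.choose_succ_succ']
      omega
    have hlow : macaulayDown (r + kruskalKatonaUp r d) (d + 1) = kruskalKatonaUp r d := by
      rcases r.eq_zero_or_pos with rfl | hr₀
      · simp
      · exact ih hr hr₀
    rw [kruskalKatonaUp_choose_add hr, add_add_add_comm, ← Nat.choose_succ_succ',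
      macaulayDown_choose_add_of_lt hsum, hlow, Nat.add_sub_cancel]

theorem macaulayDown_succ_kruskalKatonaUp_add {c d k : ℕ} (hc : c < k.choose d) :
    macaulayDown (kruskalKatonaUp c d + 1) (d + 1) + macaulayDown c d = kruskalKatonaUp c d := by
  induction d generalizing c k with
  | zero => simp [kruskalKatonaUp, macaulayDown]
  | succ d ih =>
    rcases c.eq_zero_or_pos with rfl | hc₀
    · simp [macaulayDown_one_left]
    obtain ⟨j, r, hdj, -, hr, rfl⟩ := exists_eq_choose_succ_add hc₀ hc
    rw [kruskalKatonaUp_choose_add hr, add_assoc _ _ 1,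
      macaulayDown_choose_add_of_le (kruskalKatonaUp_lt_choose hdj hr),
      macaulayDown_choose_add_of_lt hr, add_add_add_comm, ih hr,
      ← choose_succ_eq_choose_pred_add (by omega)]

/-- With `H = b^{(d)}`, the function `x ↦ x - x_⟨d + 1⟩` is monotone and exceeds `b_⟨d⟩` at `H + 1`,
so `a ≤ H`; it takes the value `b` at `b + H`, so it is at most `b` at `a + b`. -/
theorem le_macaulayDown_add {a b d k : ℕ} (hb : b < k.choose d)
    (h : a ≤ macaulayDown a (d + 1) + macaulayDown b d) :
    a ≤ macaulayDown (a + b) (d + 1) := by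
  have hsucc := macaulayDown_succ_kruskalKatonaUp_add hb
  have hadd := macaulayDown_add_kruskalKatonaUp hb
  set H := kruskalKatonaUp b d
  have haH : a ≤ H := by
    by_contra! hHa
    have := macaulayDown_add_le (H + 1) (a - (H + 1)) d
    rw [Nat.add_sub_cancel' hHa] at this
    omega
  have := macaulayDown_add_le (a + b) (H - a) d
  rw [show a + b + (H - a) = b + H by omega] at this
  omega

end MacaulayRepresentation

section ZariskiTopology

variable {K X : Type*} [Field K] [AddCommGroup X] [Module K X]

theorem const_mem_polyFuns (c : K) : (fun _ : X => c) ∈ polyFuns K X :=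
  (polyFuns K X).algebraMap_mem c

theorem linearMap_mem_polyFuns (φ : X →ₗ[K] K) : ⇑φ ∈ polyFuns K X :=
  Algebra.subset_adjoin ⟨φ, rfl⟩

theorem det_mem_polyFuns {ι : Type*} [Fintype ι] [DecidableEq ι] {A : X → Matrix ι ι K}
    (hA : ∀ i j, (fun x => A x i j) ∈ polyFuns K X) : (fun x => (A x).det) ∈ polyFuns K X := by
  have hexpand : (fun x => (A x).det) =
      ∑ σ : Equiv.Perm ι, (Equiv.Perm.sign σ : ℤ) • ∏ i, fun x => A x (σ i) i := by
    ext x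
    simp [Matrix.det_apply, Finset.sum_apply, Finset.prod_apply, Units.smul_def]
  rw [hexpand]
  exact sum_mem fun σ _ => zsmul_mem (prod_mem fun i _ => hA _ _) _

theorem isZOpen_setOf_exists_ne_zero {S : Set (X → K)} (hS : S ⊆ polyFuns K X) :
    IsZOpen K {x | ∃ f ∈ S, f x ≠ 0} :=
  ⟨S, hS, by ext x; simp⟩

theorem IsIrredVariety.inter_inter_nonempty {V U₁ U₂ : Set X} (hV : IsIrredVariety K V)
    (hU₁ : IsZOpen K U₁) (hU₂ : IsZOpen K U₂) (h₁ : (V ∩ U₁).Nonempty) (h₂ : (V ∩ U₂).Nonempty) :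
    (V ∩ (U₁ ∩ U₂)).Nonempty := by
  by_contra! hempty
  have hcover : V ⊆ U₁ᶜ ∪ U₂ᶜ := by
    rw [← Set.compl_inter, Set.subset_compl_iff_disjoint_right]
    exact Set.disjoint_iff_inter_eq_empty.2 hempty
  rcases hV.2.2 _ _ hU₁ hU₂ hcover with h | h
  · obtain ⟨x, hxV, hxU⟩ := h₁
    exact h hxV hxU
  · obtain ⟨x, hxV, hxU⟩ := h₂
    exact h hxV hxU

end ZariskiTopology

section LowerSemicontinuity

open Module

variable {K B X : Type*} [Field K] [AddCommGroup B] [Module K B] [AddCommGroup X] [Module K X]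

theorem linearIndependent_iff_exists_det_ne_zero {ι : Type*} [Fintype ι] [DecidableEq ι]
    {b : ι → B} :
    LinearIndependent K b ↔
      ∃ φ : ι → Dual K B, (Matrix.of fun i j => φ j (b i)).det ≠ 0 := by
  constructor
  · intro h
    obtain ⟨g, hg⟩ := (Fintype.linearCombination K b).exists_leftInverse_of_injective
      (LinearMap.ker_eq_bot.2 (linearIndependent_iff_injective_fintypeLinearCombination.1 h))
    have hgb (i : ι) : g (b i) = Pi.single i 1 := by
      simpa [Fintype.linearCombination_apply_single] using LinearMap.congr_fun hg (Pi.single i 1)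
    refine ⟨fun j => LinearMap.proj j ∘ₗ g, ?_⟩
    have hone : (Matrix.of fun i j => (LinearMap.proj j ∘ₗ g) (b i)) = (1 : Matrix ι ι K) := by
      ext i j
      simp [hgb, Matrix.one_apply, Pi.single_apply, eq_comm]
    rw [hone, Matrix.det_one]
    exact one_ne_zero
  · rintro ⟨φ, hφ⟩
    exact LinearIndependent.of_comp (LinearMap.pi φ) <|
      Matrix.linearIndependent_rows_iff_isUnit.2 <|
        (Matrix.isUnit_iff_isUnit_det _).2 (isUnit_iff_ne_zero.2 hφ)

theorem le_finrank_span_range_iff {ι : Type*} {b : ι → B}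
    [FiniteDimensional K (Submodule.span K (Set.range b))] {r : ℕ} :
    r ≤ finrank K (Submodule.span K (Set.range b)) ↔
      ∃ a : Fin r → ι, LinearIndependent K (b ∘ a) := by
  constructor
  · intro hr
    obtain ⟨f, hf, -, hli⟩ := Submodule.exists_fun_fin_finrank_span_eq K (Set.range b)
    choose a ha using hf
    obtain rfl : b ∘ a = f := funext ha
    exact ⟨a ∘ Fin.castLE hr, hli.comp _ (Fin.castLE_injective hr)⟩
  · rintro ⟨a, ha⟩
    calc r = finrank K (Submodule.span K (Set.range (b ∘ a))) := by
          rw [finrank_span_eq_card ha, Fintype.card_fin]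
      _ ≤ _ := Submodule.finrank_mono (Submodule.span_mono (Set.range_comp_subset_range a b))

theorem isZOpen_setOf_le_finrank_of_eq_span_range {ι : Type*} {S : X → Submodule K B}
    [∀ x, FiniteDimensional K (S x)] {T : X → ι → B}
    (hS : ∀ x, S x = Submodule.span K (Set.range (T x)))
    (hT : ∀ i (φ : Dual K B), (fun x => φ (T x i)) ∈ polyFuns K X) (r : ℕ) :
    IsZOpen K {x | r ≤ finrank K (S x)} := by
  obtain rfl : S = fun x => Submodule.span K (Set.range (T x)) := funext hS
  convert isZOpen_setOf_exists_ne_zero (K := K)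
    (S := {f | ∃ (a : Fin r → ι) (φ : Fin r → Dual K B),
      f = fun x => (Matrix.of fun i j => φ j (T x (a i))).det}) ?_ using 2
  · ext x
    simp only [le_finrank_span_range_iff, linearIndependent_iff_exists_det_ne_zero]
    aesop
  · rintro _ ⟨a, φ, rfl⟩
    exact det_mem_polyFuns fun i j => hT (a i) (φ j)

end LowerSemicontinuity

section FinrankMapComap

open Module

variable {K E F : Type*} [Field K] [AddCommGroup E] [Module K E] [AddCommGroup F] [Module K F]

theorem finrank_map_add_finrank_inf_ker (f : E →ₗ[K] F) (A : Submodule K E)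
    [FiniteDimensional K A] :
    finrank K (A.map f) + finrank K (A ⊓ LinearMap.ker f : Submodule K E) = finrank K A := by
  rw [← LinearMap.range_domRestrict, ← LinearMap.finrank_range_add_finrank_ker (f.domRestrict A),
    LinearMap.ker_domRestrict, ← Submodule.finrank_map_subtype_eq, Submodule.map_comap_subtype]

theorem finrank_inf_comap_add_finrank_sup_map (f : E →ₗ[K] F) (A : Submodule K E)
    (N : Submodule K F) [FiniteDimensional K A] [FiniteDimensional K N] :
    finrank K (A ⊓ N.comap f : Submodule K E) + finrank K (N ⊔ A.map f : Submodule K F) =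
      finrank K N + finrank K A := by
  have hker : A ⊓ N.comap f ⊓ LinearMap.ker f = A ⊓ LinearMap.ker f := by
    rw [inf_assoc, inf_eq_right.2 (LinearMap.ker_le_comap f)]
  have hcolon := finrank_map_add_finrank_inf_ker f (A ⊓ N.comap f)
  rw [hker, ← Submodule.map_inf_eq_map_inf_comap, inf_comm] at hcolon
  have hA := finrank_map_add_finrank_inf_ker f A
  have hsup := Submodule.finrank_sup_add_finrank_inf_eq N (A.map f)
  omega

end FinrankMapComap

section MultiplicationBySubspaces

open Module
open scoped Pointwise

variable {K R : Type*} [Field K] [CommRing R] [Algebra K R]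

instance finiteDimensional_pow (L : Submodule K R) [FiniteDimensional K L] (n : ℕ) :
    FiniteDimensional K (L ^ n : Submodule K R) :=
  Module.Finite.iff_fg.2 ((Module.Finite.iff_fg.1 ‹_›).pow n)

instance finiteDimensional_pointwise_smul (l : R) (A : Submodule K R) [FiniteDimensional K A] :
    FiniteDimensional K (l • A : Submodule K R) :=
  inferInstanceAs (FiniteDimensional K (A.map (LinearMap.mulLeft K l)))

theorem smul_pow_le_pow_succ {L : Submodule K R} (l : L) (n : ℕ) :
    (l : R) • L ^ n ≤ L ^ (n + 1) := by
  rintro _ ⟨a, ha, rfl⟩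
  rw [pow_succ']
  exact Submodule.mul_mem_mul l.2 ha

theorem pow_succ_le_of_span_eq_top {L N : Submodule K R} {V : Set L}
    (hV : Submodule.span K V = ⊤) {n : ℕ} (h : ∀ l ∈ V, (l : R) • L ^ n ≤ N) :
    L ^ (n + 1) ≤ N := by
  have hL : L = Submodule.span K (Subtype.val '' V) := by
    rw [← Submodule.coe_subtype, ← Submodule.map_span, hV, Submodule.map_subtype_top]
  rw [pow_succ', Submodule.mul_le]
  intro l hl a ha
  rw [hL] at hl
  induction hl using Submodule.span_induction with
  | mem _ hx =>
    obtain ⟨l, hl, rfl⟩ := hx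
    exact h l hl (Submodule.smul_mem_pointwise_smul _ _ _ ha)
  | zero => simp
  | add x y _ _ hx hy => simpa only [add_mul] using N.add_mem hx hy
  | smul c x _ hx => simpa only [smul_mul_assoc] using N.smul_mem c hx

theorem sup_iSup_smul_eq_span_range {ι : Type*} (N A : Submodule K R) (l : ι → R) :
    N ⊔ ⨆ t, l t • A = Submodule.span K
      (Set.range (Sum.elim (Subtype.val : N → R) fun ta : ι × A => l ta.1 * ta.2)) := by
  have hN : Set.range (Subtype.val : N → R) = N := Subtype.range_coe
  have hA : Set.range (fun ta : ι × A => l ta.1 * ta.2) =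
      ⋃ t, ((l t • A : Submodule K R) : Set R) := by
    ext y
    simp only [Set.mem_range, Prod.exists, Set.mem_iUnion, SetLike.mem_coe, Subtype.exists,
      Submodule.mem_smul_pointwise_iff_exists, smul_eq_mul, exists_prop]
  simp only [Set.Sum.elim_range, Submodule.span_union, hN, hA, Submodule.span_iUnion,
    Submodule.span_eq]

theorem isZOpen_setOf_le_finrank_of_eq_sup_iSup_smul {X ι : Type*} [AddCommGroup X] [Module K X]
    [Finite ι] {S : X → Submodule K R} (f : ι → X →ₗ[K] R) (N A : Submodule K R)
    [FiniteDimensional K N] [FiniteDimensional K A] (hS : ∀ x, S x = N ⊔ ⨆ t, f t x • A)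
    (r : ℕ) : IsZOpen K {x | r ≤ finrank K (S x)} := by
  have (x : X) : FiniteDimensional K (S x) := by
    rw [hS]
    infer_instance
  refine isZOpen_setOf_le_finrank_of_eq_span_range
    (fun x => (hS x).trans (sup_iSup_smul_eq_span_range N A _)) ?_ r
  rintro (y | ⟨t, a⟩) φ
  · exact const_mem_polyFuns (φ y.1)
  · exact linearMap_mem_polyFuns (φ ∘ₗ LinearMap.mulRight K (a : R) ∘ₗ f t)

theorem isZOpen_setOf_le_finrank_sup_smul (L N A : Submodule K R) [FiniteDimensional K N]
    [FiniteDimensional K A] (r : ℕ) :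
    IsZOpen K {l : L | r ≤ finrank K (N ⊔ (l : R) • A : Submodule K R)} :=
  isZOpen_setOf_le_finrank_of_eq_sup_iSup_smul (fun _ : Unit => L.subtype) N A (by simp) r

theorem isZOpen_setOf_le_finrank_iSup_smul {ι : Type*} [Finite ι] (L A : Submodule K R)
    [FiniteDimensional K A] (r : ℕ) :
    IsZOpen K {x : ι → L | r ≤ finrank K (⨆ t, (x t : R) • A : Submodule K R)} :=
  isZOpen_setOf_le_finrank_of_eq_sup_iSup_smul (fun t => L.subtype ∘ₗ LinearMap.proj t) ⊥ A
    (by simp) r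

theorem quotDim_succ_add_finrank_iSup_smul_le {ι : Type*} (L : Submodule K R)
    [FiniteDimensional K L] (x : ι → L) (d : ℕ) :
    quotDim (fun n => L ^ n) (Ideal.span (Set.range fun t => (x t : R))) (d + 1) +
      finrank K (⨆ t, (x t : R) • L ^ d : Submodule K R) ≤
        finrank K (L ^ (d + 1) : Submodule K R) := by
  set I := Ideal.span (Set.range fun t => (x t : R))
  have hle : ⨆ t, (x t : R) • L ^ d ≤
      (homComp (fun n => L ^ n) I (d + 1)).map (Submodule.subtype _) := by
    rw [homComp, Submodule.map_comap_subtype]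
    refine iSup_le fun t => le_inf (smul_pow_le_pow_succ _ _) ?_
    rintro _ ⟨a, -, rfl⟩
    exact I.mul_mem_right a (Ideal.subset_span ⟨t, rfl⟩)
  calc _ ≤ quotDim (fun n => L ^ n) I (d + 1) + finrank K (homComp (fun n => L ^ n) I (d + 1)) := by
        rw [← Submodule.finrank_map_subtype_eq]
        exact Nat.add_le_add_left (Submodule.finrank_mono hle) _
    _ = _ := Submodule.finrank_quotient_add_finrank _

end MultiplicationBySubspaces

section Green

open Module
open scoped Pointwise

variable {K R : Type*} [Field K] [CommRing R] [Algebra K R]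

theorem colon_sup_smul_le_colon {A B N : Submodule K R} {l l' : R} (hl : l • B ≤ A)
    (hl' : l' • B ≤ A) :
    A ⊓ N.comap (LinearMap.mulLeft K l) ⊔ l' • B ≤
      A ⊓ (N ⊔ l' • A).comap (LinearMap.mulLeft K l) := by
  refine sup_le (inf_le_inf_left A (Submodule.comap_mono le_sup_left)) (le_inf hl' ?_)
  rintro _ ⟨b, hb, rfl⟩
  have hswap : l' * (l * b) ∈ l' • A :=
    Submodule.smul_mem_pointwise_smul _ _ _ (hl (Submodule.smul_mem_pointwise_smul _ _ _ hb))
  rw [mul_left_comm] at hswap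
  exact Submodule.mem_sup_right hswap

theorem finrank_colon_sup_smul_add_le {A B : Submodule K R} (N : Submodule K R)
    [FiniteDimensional K A] [FiniteDimensional K N] {l l' : R} (hl : l • B ≤ A)
    (hl' : l' • B ≤ A) :
    finrank K (A ⊓ N.comap (LinearMap.mulLeft K l) ⊔ l' • B : Submodule K R) +
      finrank K (N ⊔ l • A ⊔ l' • A : Submodule K R) ≤
        finrank K (N ⊔ l' • A : Submodule K R) + finrank K A := by
  rw [sup_right_comm N]
  calc _ ≤ _ := Nat.add_le_add_right (Submodule.finrank_mono (colon_sup_smul_le_colon hl hl')) _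
    _ = _ := finrank_inf_comap_add_finrank_sup_map (LinearMap.mulLeft K l) A (N ⊔ l' • A)

variable {L : Submodule K R} [FiniteDimensional K L] {V : Set L}

theorem exists_mem_forall_finrank_sup_smul_le (hV : V.Nonempty) (N : Submodule K R)
    [FiniteDimensional K N] (e : ℕ) :
    ∃ l ∈ V, ∀ l' ∈ V, finrank K (N ⊔ (l' : R) • L ^ e : Submodule K R) ≤
      finrank K (N ⊔ (l : R) • L ^ e : Submodule K R) := by
  let dim (l : L) : ℕ := finrank K (N ⊔ (l : R) • L ^ e : Submodule K R)
  have hbdd : BddAbove (dim '' V) := by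
    refine ⟨finrank K (N ⊔ L ^ (e + 1) : Submodule K R), ?_⟩
    rintro _ ⟨l, -, rfl⟩
    exact Submodule.finrank_mono (sup_le_sup_left (smul_pow_le_pow_succ l e) N)
  obtain ⟨l, hl, hmax⟩ := Nat.sSup_mem (hV.image dim) hbdd
  exact ⟨l, hl, fun l' hl' => (le_csSup hbdd ⟨l', hl', rfl⟩).trans_eq hmax.symm⟩

theorem exists_mem_finrank_lt_finrank_sup_smul (hspan : Submodule.span K V = ⊤)
    {N : Submodule K R} [FiniteDimensional K N] {e : ℕ} (hN : ¬ L ^ (e + 1) ≤ N) :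
    ∃ l ∈ V, finrank K N < finrank K (N ⊔ (l : R) • L ^ e : Submodule K R) := by
  obtain ⟨l, hl, hlN⟩ : ∃ l ∈ V, ¬ (l : R) • L ^ e ≤ N := by
    by_contra! h
    exact hN (pow_succ_le_of_span_eq_top hspan h)
  exact ⟨l, hl, Submodule.finrank_lt_finrank_of_lt (left_lt_sup.2 hlN)⟩

theorem exists_mem_maximal_finrank_sup_smul (hne : V.Nonempty)
    (hspan : Submodule.span K V = ⊤) {e c : ℕ} {N : Submodule K R} (hN : N ≤ L ^ (e + 1))
    (hc : finrank K N + c = finrank K (L ^ (e + 1) : Submodule K R)) :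
    ∃ l ∈ V, ∃ a b : ℕ, a + b = c ∧ (b = 0 → a = 0) ∧
      finrank K (N ⊔ (l : R) • L ^ e : Submodule K R) + a =
        finrank K (L ^ (e + 1) : Submodule K R) ∧
      ∀ l' ∈ V, finrank K (N ⊔ (l' : R) • L ^ e : Submodule K R) ≤
        finrank K (N ⊔ (l : R) • L ^ e : Submodule K R) := by
  have := Submodule.finiteDimensional_of_le hN
  obtain ⟨l, hl, hmax⟩ := exists_mem_forall_finrank_sup_smul_le hne N e
  have hle : N ⊔ (l : R) • L ^ e ≤ L ^ (e + 1) := sup_le hN (smul_pow_le_pow_succ l e)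
  obtain ⟨a, ha⟩ := exists_add_of_le (Submodule.finrank_mono hle)
  obtain ⟨b, hb⟩ := exists_add_of_le
    (Submodule.finrank_mono (le_sup_left : N ≤ N ⊔ (l : R) • L ^ e))
  refine ⟨l, hl, a, b, by omega, fun hb₀ => ?_, ha.symm, hmax⟩
  by_cases htop : L ^ (e + 1) ≤ N
  · have := Submodule.finrank_mono htop
    omega
  · obtain ⟨l', hl', hlt⟩ := exists_mem_finrank_lt_finrank_sup_smul hspan htop
    have := hmax l' hl'
    omega

/-- The two hypotheses on `a` and `b` hold on nonempty open subsets of `V`, hence at a common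
point `l'`, which is compared with `l` through the maximality of `l`. -/
theorem le_macaulayDown_add_macaulayDown_of_maximal (hV : IsIrredVariety K V) {e a b : ℕ}
    {N : Submodule K R} [FiniteDimensional K N] {l : L}
    (hmax : ∀ l' ∈ V, finrank K (N ⊔ (l' : R) • L ^ (e + 1) : Submodule K R) ≤
      finrank K (N ⊔ (l : R) • L ^ (e + 1) : Submodule K R))
    (ha : finrank K (N ⊔ (l : R) • L ^ (e + 1) : Submodule K R) + a =
      finrank K (L ^ (e + 2) : Submodule K R))
    (hsum : ∃ l' ∈ V, finrank K (L ^ (e + 2) : Submodule K R) ≤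
      finrank K (N ⊔ (l : R) • L ^ (e + 1) ⊔ (l' : R) • L ^ (e + 1) : Submodule K R) +
        macaulayDown a (e + 2))
    (hcolon : ∃ l' ∈ V, finrank K (L ^ (e + 1) : Submodule K R) ≤
      finrank K (L ^ (e + 1) ⊓ N.comap (LinearMap.mulLeft K (l : R)) ⊔ (l' : R) • L ^ e :
        Submodule K R) + macaulayDown b (e + 1)) :
    a ≤ macaulayDown a (e + 2) + macaulayDown b (e + 1) := by
  simp only [← tsub_le_iff_right] at hsum hcolon
  obtain ⟨l', hl', hl'sum, hl'colon⟩ := hV.inter_inter_nonempty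
    (isZOpen_setOf_le_finrank_sup_smul L _ _ _) (isZOpen_setOf_le_finrank_sup_smul L _ _ _)
    hsum hcolon
  simp only [Set.mem_ofPred_eq, tsub_le_iff_right] at hl'sum hl'colon
  have hcompare := finrank_colon_sup_smul_add_le N (smul_pow_le_pow_succ l e)
    (smul_pow_le_pow_succ l' e)
  have := hmax l' hl'
  omega

/-- Green's hyperplane restriction theorem, relative to a subspace `N` so that the induction applies
to `N + l L ^ e` and to the colon space of `N` by `l`. -/
theorem exists_mem_finrank_pow_le_finrank_sup_smul_add (hV : IsIrredVariety K V)
    (hspan : Submodule.span K V = ⊤) (e : ℕ) {c : ℕ} {N : Submodule K R}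
    (hN : N ≤ L ^ (e + 1)) (hc : finrank K N + c = finrank K (L ^ (e + 1) : Submodule K R)) :
    ∃ l ∈ V, finrank K (L ^ (e + 1) : Submodule K R) ≤
      finrank K (N ⊔ (l : R) • L ^ e : Submodule K R) + macaulayDown c (e + 1) := by
  induction e generalizing c N with
  | zero =>
    obtain ⟨l, hl, a, b, rfl, hab, ha, -⟩ := exists_mem_maximal_finrank_sup_smul hV.2.1 hspan hN hc
    refine ⟨l, hl, ?_⟩
    rw [macaulayDown_one_right]
    omega
  | succ e ihe =>
    induction c using Nat.strong_induction_on generalizing N with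
    | _ c ihc =>
      have := Submodule.finiteDimensional_of_le hN
      obtain ⟨l, hl, a, b, rfl, hab, ha, hmax⟩ :=
        exists_mem_maximal_finrank_sup_smul hV.2.1 hspan hN hc
      refine ⟨l, hl, ha.ge.trans (Nat.add_le_add_left ?_ _)⟩
      rcases b.eq_zero_or_pos with hb₀ | hb₀
      · simp [hab hb₀]
      have hsum := ihc a (by omega) (sup_le hN (smul_pow_le_pow_succ l (e + 1))) ha
      have hrank : finrank K (L ^ (e + 1) ⊓ N.comap (LinearMap.mulLeft K (l : R)) :
          Submodule K R) + finrank K (N ⊔ (l : R) • L ^ (e + 1) : Submodule K R) = _ :=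
        finrank_inf_comap_add_finrank_sup_map (LinearMap.mulLeft K (l : R)) (L ^ (e + 1)) N
      have hcolon := ihe (c := b) (N := L ^ (e + 1) ⊓ N.comap (LinearMap.mulLeft K (l : R)))
        inf_le_left (by omega)
      obtain ⟨q, hq⟩ := exists_lt_choose_succ b e
      exact le_macaulayDown_add hq
        (le_macaulayDown_add_macaulayDown_of_maximal hV hmax ha hsum hcolon)

end Green

section GeneralPoints

open Module
open scoped Pointwise

variable {K R : Type*} [Field K] [CommRing R] [Algebra K R]
  {L : Submodule K R} [FiniteDimensional K L] {V : Set L}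

theorem exists_forall_mem_finrank_pow_le_finrank_iSup_smul_add (hV : IsIrredVariety K V)
    (hspan : Submodule.span K V = ⊤) {d : ℕ} {k : ℕ → ℕ}
    (hk : StrictMonoOn k (Set.Icc 1 (d + 1)))
    (hrep : finrank K (L ^ (d + 1) : Submodule K R) = ∑ i ∈ Finset.Icc 1 (d + 1), (k i).choose i)
    (p : ℕ) :
    ∃ x : Fin p → L, (∀ t, x t ∈ V) ∧ finrank K (L ^ (d + 1) : Submodule K R) ≤
      finrank K (⨆ t, (x t : R) • L ^ d : Submodule K R) +
        ∑ i ∈ Finset.Icc 1 (d + 1), (k i - p).choose i := by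
  induction p with
  | zero => exact ⟨Fin.elim0, fun t => t.elim0, by simp [hrep]⟩
  | succ p ih =>
    obtain ⟨x, hx, hle⟩ := ih
    have hsub : ⨆ t, (x t : R) • L ^ d ≤ L ^ (d + 1) :=
      iSup_le fun t => smul_pow_le_pow_succ (x t) d
    obtain ⟨c, hc⟩ := exists_add_of_le (Submodule.finrank_mono hsub)
    obtain ⟨l, hl, hgreen⟩ :=
      exists_mem_finrank_pow_le_finrank_sup_smul_add hV hspan d hsub hc.symm
    refine ⟨Fin.cons l x, Fin.cases hl hx, ?_⟩
    have hsup : ⨆ t, ((Fin.cons l x : Fin (p + 1) → L) t : R) • L ^ d =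
        (⨆ t, (x t : R) • L ^ d) ⊔ (l : R) • L ^ d := by
      rw [← (finSuccEquiv p).symm.iSup_comp, iSup_option, sup_comm]
      rfl
    rw [hsup, ← macaulayDown_sum_choose_sub hk]
    exact hgreen.trans (Nat.add_le_add_left (macaulayDown_mono d (by omega)) _)

theorem restriction_by_general_points_of_variety_general (hV : IsIrredVariety K V)
    (hspan : Submodule.span K V = ⊤) {d : ℕ} (hd : 0 < d) {k : ℕ → ℕ}
    (hk : StrictMonoOn k (Set.Icc 1 d))
    (hrep : finrank K (L ^ d : Submodule K R) = ∑ i ∈ Finset.Icc 1 d, (k i).choose i) (p : ℕ) :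
    ∃ U : Set (Fin p → L),
      (∃ W : Set (Fin p → L), IsZOpen K W ∧ U = {x | ∀ t, x t ∈ V} ∩ W) ∧
      U.Nonempty ∧
      ∀ x ∈ U, quotDim (fun n => L ^ n) (Ideal.span (Set.range fun t => (x t : R))) d ≤
        ∑ i ∈ Finset.Icc 1 d, (k i - p).choose i := by
  obtain ⟨d, rfl⟩ := Nat.exists_eq_add_one.2 hd
  obtain ⟨x, hxV, hx⟩ :=
    exists_forall_mem_finrank_pow_le_finrank_iSup_smul_add hV hspan hk hrep p
  refine ⟨_, ⟨_, isZOpen_setOf_le_finrank_iSup_smul L (L ^ d) _, rfl⟩,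
    ⟨x, hxV, tsub_le_iff_right.2 hx⟩, fun y hy => ?_⟩
  have hopen := hy.2
  rw [Set.mem_ofPred_eq, tsub_le_iff_right] at hopen
  have := quotDim_succ_add_finrank_iSup_smul_le L y d
  omega

theorem pow_eq_of_forall_succ_eq_mul {𝒜 : ℕ → Submodule K R} (h0 : 𝒜 0 = 1)
    (hstd : ∀ n, 𝒜 (n + 1) = 𝒜 1 * 𝒜 n) (n : ℕ) : 𝒜 1 ^ n = 𝒜 n := by
  induction n with
  | zero => rw [pow_zero, h0]
  | succ n ih => rw [hstd n, pow_succ', ih]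

end GeneralPoints

/-- **Theorem (restriction by general points of an irreducible variety).**
Let `R = K[X_1,…,X_n]/I` be a standard graded algebra (presented by a graded surjection
`g`), let `V ⊆ 𝔸(R_1)` be an irreducible variety spanning `R_1`, and assume `K` is
algebraically closed or the defining ideal of `V` is homogeneous (i.e. `V` is cut out by
homogeneous polynomial functions).  If `dim_K R_d = C(k_d,d) + … + C(k_1,1)` is the
`d`-th Macaulay representation, then for `p` linear forms that are general points of `V`
one has `dim_K (R/(l_1,…,l_p))_d ≤ C(k_d - p,d) + … + C(k_1 - p,1)`. -/
theorem restriction_by_general_points_of_variety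
    {K R : Type*} [Field K] [CommRing R] [Algebra K R]
    (𝒜 : ℕ → Submodule K R) [GradedAlgebra 𝒜]
    (h0 : 𝒜 0 = (1 : Submodule K R)) (hstd : ∀ n, 𝒜 (n + 1) = 𝒜 1 * 𝒜 n)
    [FiniteDimensional K (𝒜 1)]
    (n : ℕ) (g : MvPolynomial (Fin n) K →ₐ[K] R) (hg : Function.Surjective g)
    (hgX : ∀ i, g (MvPolynomial.X i) ∈ 𝒜 1)
    (V : Set (𝒜 1)) (hV : IsIrredVariety K V)
    (hspan : Submodule.span K V = (⊤ : Submodule K (𝒜 1)))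
    (hcase : IsAlgClosed K ∨
      ∃ S : Set ((𝒜 1) → K),
        (∀ f ∈ S, f ∈ polyFuns K (𝒜 1) ∧
          ∃ m : ℕ, ∀ (c : K) (v : 𝒜 1), f (c • v) = c ^ m * f v) ∧
        V = {v | ∀ f ∈ S, f v = 0})
    (d : ℕ) (hd : 0 < d)
    (k : ℕ → ℕ) (hk : ∀ i j, 1 ≤ i → i < j → j ≤ d → k i < k j)
    (hrep : Module.finrank K (𝒜 d) = ∑ i ∈ Finset.Icc 1 d, (k i).choose i)
    (p : ℕ) :
    ∃ U : Set (Fin p → 𝒜 1),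
      (∃ W : Set (Fin p → 𝒜 1), IsZOpen K W ∧ U = {x | ∀ t, x t ∈ V} ∩ W) ∧
      U.Nonempty ∧
      ∀ x ∈ U,
        quotDim 𝒜 (Ideal.span (Set.range fun t => (x t : R))) d ≤
          ∑ i ∈ Finset.Icc 1 d, (k i - p).choose i := by
  have hpow := pow_eq_of_forall_succ_eq_mul h0 hstd
  simpa only [hpow] using restriction_by_general_points_of_variety_general hV hspan hd
    (fun i hi j hj hij => hk i j hi.1 hij hj.2) (by rw [hpow, hrep]) p
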